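/- arXiv:2009.07348 — 2 statements merged into one kernel-verified Lean document; each statement's English description precedes it below -/
import Mathlib

section
/- Let λ be a finite totally ordered set. Then for every k ≥ 1, q_k(λ) = τ_k(|λ|). -/
/-!
The theorem follows from the equivalence `q_k(s) ≤ t ↔ |s| ≤ T_k(t)` (`qk_le_iff`), proved by
induction on `k` and then on `t`. Unfolding the recursion, `q_k(s) ≤ t + 1` for a nonempty chain
`s` means that some `u ∈ s` has `q_k(s_{<u}) ≤ t` and `q_{k-1}(s_{>u}) ≤ t`, that is, at most
`T_k(t)` elements of `s` lie below `u` and at most `T_{k-1}(t)` above it. A chain contains an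
element of every rank, so such a `u` exists exactly when `|s| ≤ T_k(t) + 1 + T_{k-1}(t)`, and the
right-hand side is `T_k(t + 1)` by Pascal's rule.
-/

open Classical in
/-- The query function `q_k(λ)`: `q_k(∅) = 0`, `q_1(λ) = |λ|`, and for `k > 1` and
`λ ≠ ∅`, `q_k(λ) = 1 + min_{u ∈ λ} max {q_k(λ_{⋡u}), q_{k-1}(λ_{≻u})}`. -/
noncomputable def qk {α : Type*} [PartialOrder α] (k : ℕ) (s : Finset α) : ℕ :=
  if h : s.Nonempty then
    if k ≤ 1 then s.card
    else 1 + s.attach.inf' (Finset.attach_nonempty_iff.mpr h) (fun u =>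
      max (qk k (s.filter fun v => ¬ u.1 ≤ v))
          (qk (k - 1) (s.filter fun v => u.1 < v)))
  else 0
  termination_by (k, s.card)
  decreasing_by
  · apply Prod.Lex.right
    apply Finset.card_lt_card
    rw [Finset.filter_ssubset]
    exact ⟨u.1, u.2, by simp⟩
  · apply Prod.Lex.left
    omega

/-- `T_k(x) = Σ_{i=1}^k C(x, i)`. -/
def Tk (k x : ℕ) : ℕ := ∑ i ∈ Finset.Icc 1 k, x.choose i

/-- `τ_k(x)` is the least nonnegative integer `t` such that `x ≤ T_k(t)`. -/
noncomputable def tauk (k x : ℕ) : ℕ := sInf {t : ℕ | x ≤ Tk k t}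

lemma Tk_zero_right (k : ℕ) : Tk k 0 = 0 := by
  unfold Tk
  refine Finset.sum_eq_zero fun i hi => ?_
  have := (Finset.mem_Icc.mp hi).1
  exact Nat.choose_eq_zero_of_lt this

lemma Tk_one_left (t : ℕ) : Tk 1 t = t := by
  simp [Tk]

lemma Tk_succ_left (k t : ℕ) : Tk (k + 1) t = Tk k t + t.choose (k + 1) := by
  unfold Tk
  rw [Finset.sum_Icc_succ_top (by omega)]

/-- Pascal's rule, summed over the lower index. -/
lemma Tk_succ_succ (k t : ℕ) : Tk (k + 1) (t + 1) = Tk (k + 1) t + 1 + Tk k t := by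
  induction k with
  | zero => simp [Tk]
  | succ k ih =>
    rw [Tk_succ_left (k + 1) (t + 1), ih, Tk_succ_left (k + 1) t, Tk_succ_left k t,
      Nat.choose_succ_succ t (k + 1)]
    ring

/-- A finite chain has an element of each rank `n < |s|`. -/
lemma exists_card_filter_lt {α : Type*} [LinearOrder α] (s : Finset α) (n : ℕ)
    (hn : n < s.card) : ∃ u ∈ s, (s.filter fun v => v < u).card = n := by
  refine ⟨s.orderEmbOfFin rfl ⟨n, hn⟩, s.orderEmbOfFin_mem rfl _, ?_⟩
  have h : (s.filter fun v => v < s.orderEmbOfFin rfl ⟨n, hn⟩)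
      = (Finset.Iio (⟨n, hn⟩ : Fin s.card)).map (s.orderEmbOfFin rfl).toEmbedding := by
    ext v
    simp only [Finset.mem_filter, Finset.mem_map, Finset.mem_Iio]
    constructor
    · rintro ⟨hv, hlt⟩
      have hr : v ∈ Set.range (s.orderEmbOfFin rfl) := by
        rw [Finset.range_orderEmbOfFin]; exact hv
      obtain ⟨i, rfl⟩ := hr
      exact ⟨i, (s.orderEmbOfFin rfl).lt_iff_lt.mp hlt, rfl⟩
    · rintro ⟨i, hi, rfl⟩
      exact ⟨s.orderEmbOfFin_mem rfl i, (s.orderEmbOfFin rfl).lt_iff_lt.mpr hi⟩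
  rw [h, Finset.card_map, Fin.card_Iio]

lemma card_eq_lt_add_gt {α : Type*} [LinearOrder α] (s : Finset α) {u : α} (hu : u ∈ s) :
    s.card = (s.filter fun v => v < u).card + 1 + (s.filter fun v => u < v).card := by
  have h1 := Finset.card_filter_add_card_filter_not (s := s) (fun v => v < u)
  have h2 : (s.filter fun v => ¬ v < u) = insert u (s.filter fun v => u < v) := by
    ext v
    simp only [Finset.mem_filter, Finset.mem_insert, not_lt]
    constructor
    · rintro ⟨hv, h⟩
      rcases h.eq_or_lt with h | h
      · exact Or.inl h.symm
      · exact Or.inr ⟨hv, h⟩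
    · rintro (rfl | ⟨hv, h⟩)
      · exact ⟨hu, le_rfl⟩
      · exact ⟨hv, h.le⟩
  rw [h2, Finset.card_insert_of_notMem (by simp)] at h1
  omega

lemma qk_empty {α : Type*} [PartialOrder α] (k : ℕ) : qk k (∅ : Finset α) = 0 := by
  rw [qk]; simp

lemma qk_one {α : Type*} [PartialOrder α] (s : Finset α) : qk 1 s = s.card := by
  rw [qk]
  rcases s.eq_empty_or_nonempty with rfl | h
  · simp
  · simp [h]

lemma qk_pos {α : Type*} [PartialOrder α] (k : ℕ) {s : Finset α} (hs : s.Nonempty) :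
    0 < qk k s := by
  rw [qk, dif_pos hs]
  split_ifs
  · exact hs.card_pos
  · omega

/-- The recursion for `q_k` on a chain, where `λ_{⋡u}` is the set of elements below `u`. -/
lemma qk_le_succ_iff {α : Type*} [LinearOrder α] (k : ℕ) {s : Finset α} (hs : s.Nonempty)
    (t : ℕ) : qk (k + 2) s ≤ t + 1 ↔ ∃ u ∈ s, qk (k + 2) (s.filter fun v => v < u) ≤ t ∧
      qk (k + 1) (s.filter fun v => u < v) ≤ t := by
  rw [qk, dif_pos hs, if_neg (by omega), add_comm 1, Nat.add_le_add_iff_right, Finset.inf'_le_iff]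
  simp only [Finset.mem_attach, true_and, Subtype.exists, max_le_iff, not_le, exists_prop]
  rfl

lemma qk_le_iff {α : Type*} [LinearOrder α] (k t : ℕ) (s : Finset α) :
    qk (k + 1) s ≤ t ↔ s.card ≤ Tk (k + 1) t := by
  induction k generalizing t s with
  | zero => rw [zero_add, qk_one, Tk_one_left]
  | succ k ihk =>
    induction t generalizing s with
    | zero =>
      rw [Tk_zero_right]
      rcases s.eq_empty_or_nonempty with rfl | hs
      · simp [qk_empty]
      · have h1 := qk_pos (k + 1 + 1) hs
        have h2 := hs.card_pos
        omega
    | succ t iht =>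
      rcases s.eq_empty_or_nonempty with rfl | hs
      · simp [qk_empty]
      rw [qk_le_succ_iff k hs, Tk_succ_succ]
      simp only [ihk, iht]
      constructor
      · rintro ⟨u, hu, h1, h2⟩
        have := card_eq_lt_add_gt s hu
        omega
      · intro h
        have hpos := hs.card_pos
        -- Take `u` of the largest rank compatible with `|s_{<u}| ≤ T_k(t)`.
        obtain ⟨u, hu, hc⟩ :=
          exists_card_filter_lt s (min (s.card - 1) (Tk (k + 1 + 1) t)) (by omega)
        have := card_eq_lt_add_gt s hu
        exact ⟨u, hu, by omega, by omega⟩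

theorem qk_total_order {α : Type*} [LinearOrder α] (k : ℕ) (hk : 1 ≤ k) (s : Finset α) :
    qk k s = tauk k s.card := by
  obtain ⟨k, rfl⟩ := Nat.exists_eq_add_of_le' hk
  have h : {t : ℕ | s.card ≤ Tk (k + 1) t} = Set.Ici (qk (k + 1) s) := by
    ext t
    exact (qk_le_iff k t s).symm
  rw [tauk, h, csInf_Ici]
end

section
/- Let x, y ∈ ℤ≥0 and ℓ ≥ 1 with ℓ ≤ τ_2(x) and y + ℓ·τ_2(x) ≤ x + T_2(ℓ − 1). Then τ_2(y) + ℓ ≤ τ_2(x). -/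
/-!
Write `τ_2(x) = ℓ + s`. Since `T_2(ℓ + s) = T_2(ℓ) + T_2(s) + ℓ s` and
`T_2(ℓ) + T_2(ℓ - 1) = ℓ ^ 2`, the bound `x ≤ T_2(ℓ + s)` turns the hypothesis into
`y ≤ T_2(s)`, and minimality of `τ_2(y)` gives `τ_2(y) ≤ s`.
-/

/-- The `x`-th triangular number `T_2(x) = x(x+1)/2`. -/
def T2 (x : ℕ) : ℕ := x * (x + 1) / 2

/-- `τ_2(x)` is the least nonnegative integer `t` such that `x ≤ T_2(t)`. -/
noncomputable def tau2 (x : ℕ) : ℕ := sInf {t : ℕ | x ≤ T2 t}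

theorem two_mul_T2 (n : ℕ) : 2 * T2 n = n * (n + 1) :=
  Nat.mul_div_cancel' (Nat.even_mul_succ_self n).two_dvd

theorem le_T2_tau2 (x : ℕ) : x ≤ T2 (tau2 x) := by
  have hne : {t : ℕ | x ≤ T2 t}.Nonempty := by
    refine ⟨x, ?_⟩
    have := two_mul_T2 x
    simp only [Set.mem_ofPred_eq]
    nlinarith [Nat.le_mul_self x]
  exact Nat.sInf_mem hne

theorem tau2_add_le (x y ℓ : ℕ) (hℓ : 1 ≤ ℓ) (hℓx : ℓ ≤ tau2 x)
    (h : y + ℓ * tau2 x ≤ x + T2 (ℓ - 1)) :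
    tau2 y + ℓ ≤ tau2 x := by
  have hx := le_T2_tau2 x
  obtain ⟨s, hs⟩ := Nat.exists_eq_add_of_le hℓx
  obtain ⟨k, rfl⟩ := Nat.exists_eq_add_of_le' hℓ
  rw [hs] at h hx ⊢
  rw [Nat.add_sub_cancel] at h
  have hy : y ≤ T2 s := by
    have h1 := two_mul_T2 (k + 1 + s)
    have h2 := two_mul_T2 k
    have h3 := two_mul_T2 s
    nlinarith
  have hmin : tau2 y ≤ s := Nat.sInf_le hy
  omega
end
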